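/- arXiv:1410.5499 — 4 statements merged into one kernel-verified Lean document; each statement's English description precedes it below -/
import Mathlib

section
/- (Theorem 2.) Let N ≥ 2, let R be an N×N real symmetric positive-definite matrix, let D be the (N−1)×(N−1) difference covariance matrix with entries D_{mn} = R_{NN} + R_{mn} − R_{mN} − R_{nN}, and let u, v ∈ ℝ^N with difference vectors Δu, Δv ∈ ℝ^{N−1} satisfying Δv ≠ Δu. Let λ > 0, set q = (Δv − Δu)ᵀ D⁻¹ (Δv − Δu) > 0 and Γ = ln λ + (1/2)·(Δv − Δu)ᵀ D⁻¹ (Δv + Δu). Then: (i) if Δy is distributed according to the multivariate Gaussian measure N(Δu, D) on ℝ^{N−1}, the false positive rate satisfies P( (Δv − Δu)ᵀ D⁻¹ Δy ≥ Γ ) = Q( (ln λ + q/2) / √q ); and (ii) if Δy is distributed according to N(Δv, D), the detection rate satisfies P( (Δv − Δu)ᵀ D⁻¹ Δy ≥ Γ ) = Q( (ln λ − q/2) / √q ). -/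
open Matrix MeasureTheory

/-- The multivariate Gaussian measure on `ℝ^N` with mean `μ` and (positive-definite)
covariance matrix `S`, given by its Lebesgue density
`((2π)^N det S)^{-1/2} exp(−(1/2)(x−μ)ᵀ S⁻¹ (x−μ))`. -/
noncomputable def mvGaussian {N : ℕ} (μ : Fin N → ℝ) (S : Matrix (Fin N) (Fin N) ℝ) :
    Measure (Fin N → ℝ) :=
  volume.withDensity fun x =>
    ENNReal.ofReal ((Real.sqrt ((2 * Real.pi) ^ N * S.det))⁻¹ *
      Real.exp (-(1 / 2) * ((x - μ) ⬝ᵥ (S⁻¹).mulVec (x - μ))))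

/-- The standard normal tail function `Q(x) = (1/√(2π)) ∫_x^∞ exp(−t²/2) dt`. -/
noncomputable def gaussQ (x : ℝ) : ℝ :=
  (Real.sqrt (2 * Real.pi))⁻¹ * ∫ t in Set.Ici x, Real.exp (-t ^ 2 / 2)

/-- The difference covariance matrix: for an `N×N` matrix `R` with `N = n+2`, the
`(N−1)×(N−1)` matrix with entries `D_{mk} = R_{NN} + R_{mk} − R_{mN} − R_{kN}`. -/
def diffMatrix {n : ℕ} (R : Matrix (Fin (n + 2)) (Fin (n + 2)) ℝ) :
    Matrix (Fin (n + 1)) (Fin (n + 1)) ℝ :=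
  fun m k =>
    R (Fin.last (n + 1)) (Fin.last (n + 1)) + R m.castSucc k.castSucc
      - R m.castSucc (Fin.last (n + 1)) - R k.castSucc (Fin.last (n + 1))

/-- The difference vector `Δg ∈ ℝ^{N−1}`, `(Δg)_m = g_m − g_N`. -/
def diffVec {n : ℕ} (g : Fin (n + 2) → ℝ) : Fin (n + 1) → ℝ :=
  fun m => g m.castSucc - g (Fin.last (n + 1))

/-! Write `D = B R Bᵀ`, where the difference operator `B` has full row rank, so that `D` is
positive definite. For symmetric `A` with `A² = D`, the change of variables `x ↦ μ + A x` carries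
the standard Gaussian density to that of `N(μ, D)`; hence a linear statistic `w ⬝ᵥ y` of
`y ∼ N(μ, D)` is `N(w ⬝ᵥ μ, wᵀ D w)` and exceeds `c` with probability
`Q((c - w ⬝ᵥ μ) / √(wᵀ D w))`. For `w = D⁻¹ d` with `d = Δv - Δu` the variance is `q`, and `Γ`
exceeds the mean `dᵀ D⁻¹ Δu` by `ln λ + q / 2` and the mean `dᵀ D⁻¹ Δv` by `ln λ - q / 2`. -/

open ProbabilityTheory WithLp
open scoped ENNReal RealInnerProductSpace

section DifferenceOperator

variable {n : ℕ}

/-- The matrix of the difference operator `g ↦ Δg` from `ℝ^N` to `ℝ^(N-1)`, with `N = n + 2`: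
it subtracts the last coordinate from each of the others. The column maps are `Equiv.refl` rather
than `id` to match `Matrix.one_submatrix_mul`. -/
def diffOperator (n : ℕ) : Matrix (Fin (n + 1)) (Fin (n + 2)) ℝ :=
  (1 : Matrix _ _ ℝ).submatrix Fin.castSucc (Equiv.refl _) -
    (1 : Matrix _ _ ℝ).submatrix (fun _ ↦ Fin.last (n + 1)) (Equiv.refl _)

lemma diffOperator_mul_mul_transpose {R : Matrix (Fin (n + 2)) (Fin (n + 2)) ℝ} (hR : R.IsSymm) :
    diffOperator n * R * (diffOperator n)ᵀ = diffMatrix R := by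
  ext m k
  simp only [diffOperator, transpose_sub, transpose_submatrix, transpose_one, Matrix.sub_mul,
    Matrix.mul_sub, one_submatrix_mul, mul_submatrix_one, Matrix.sub_apply, submatrix_apply,
    diffMatrix, Equiv.refl_symm, Equiv.refl_apply, Function.comp_apply, id_eq,
    hR.apply k.castSucc (Fin.last (n + 1))]
  ring

lemma vecMul_diffOperator_injective : Function.Injective (diffOperator n).vecMul := by
  have h_castSucc (x : Fin (n + 1) → ℝ) (k : Fin (n + 1)) :
      (x ᵥ* diffOperator n) k.castSucc = x k := by
    simp [diffOperator, vecMul, dotProduct, one_apply, Fin.castSucc_ne_last, eq_comm]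
  intro x y hxy
  ext k
  rw [← h_castSucc x, ← h_castSucc y]
  exact congrFun hxy k.castSucc

lemma diffMatrix_posDef {R : Matrix (Fin (n + 2)) (Fin (n + 2)) ℝ} (hR : R.PosDef) :
    (diffMatrix R).PosDef := by
  have hR_symm : R.IsSymm := (conjTranspose_eq_transpose_of_trivial R).symm.trans hR.isHermitian
  rw [← diffOperator_mul_mul_transpose hR_symm, ← conjTranspose_eq_transpose_of_trivial]
  exact hR.mul_mul_conjTranspose_same vecMul_diffOperator_injective

end DifferenceOperator

section ChangeOfVariables

lemma map_withDensity_comp {α β : Type*} [MeasurableSpace α] [MeasurableSpace β]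
    (ν : Measure α) {f : α → β} (hf : Measurable f) {g : β → ℝ≥0∞} (hg : Measurable g) :
    (ν.withDensity (g ∘ f)).map f = (ν.map f).withDensity g := by
  ext s hs
  rw [Measure.map_apply hf hs, withDensity_apply _ (hf hs), withDensity_apply _ hs,
    setLIntegral_map hs hg hf]
  rfl

variable {ι : Type*} [Fintype ι] [DecidableEq ι]

lemma map_add_mulVec_volume (b : ι → ℝ) {A : Matrix ι ι ℝ} (hA : A.det ≠ 0) :
    (volume : Measure (ι → ℝ)).map (fun x ↦ b + A *ᵥ x) = ENNReal.ofReal |A.det⁻¹| • volume := by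
  have hA_meas : Measurable (toLin' A) := (toLin' A).continuous_of_finiteDimensional.measurable
  have h_comp : (fun x ↦ b + A *ᵥ x) = (b + ·) ∘ toLin' A := rfl
  rw [h_comp, ← Measure.map_map (measurable_const_add b) hA_meas,
    Real.map_matrix_volume_pi_eq_smul_volume_pi hA, Measure.map_smul, map_add_left_eq_self]

lemma mulVec_dotProduct_inv_mulVec {α : Type*} [CommRing α] {A : Matrix ι ι α} (hA : IsUnit A.det)
    (S : Matrix ι ι α) (x : ι → α) :
    (A *ᵥ x) ⬝ᵥ (A * S * Aᵀ)⁻¹ *ᵥ (A *ᵥ x) = x ⬝ᵥ S⁻¹ *ᵥ x := by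
  have hAT_unit : IsUnit Aᵀ.det := by rwa [det_transpose]
  rw [← vecMul_transpose, ← dotProduct_mulVec, vecMul_transpose, mulVec_mulVec, mulVec_mulVec,
    Matrix.mul_inv_rev, Matrix.mul_inv_rev, ← Matrix.mul_assoc, ← Matrix.mul_assoc,
    mul_nonsing_inv _ hAT_unit, Matrix.one_mul, nonsing_inv_mul_cancel_right _ _ hA]

end ChangeOfVariables

section Density

variable {N : ℕ}

/-- The density of `mvGaussian μ S` with respect to Lebesgue measure, as a real-valued function. -/
noncomputable def mvGaussianPDFReal (μ : Fin N → ℝ) (S : Matrix (Fin N) (Fin N) ℝ)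
    (x : Fin N → ℝ) : ℝ :=
  (√((2 * Real.pi) ^ N * S.det))⁻¹ * Real.exp (-(1 / 2) * ((x - μ) ⬝ᵥ S⁻¹ *ᵥ (x - μ)))

lemma mvGaussian_eq_withDensity (μ : Fin N → ℝ) (S : Matrix (Fin N) (Fin N) ℝ) :
    mvGaussian μ S = volume.withDensity fun x ↦ ENNReal.ofReal (mvGaussianPDFReal μ S x) := rfl

@[fun_prop]
lemma measurable_mvGaussianPDFReal (μ : Fin N → ℝ) (S : Matrix (Fin N) (Fin N) ℝ) :
    Measurable (mvGaussianPDFReal μ S) := by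
  have h_cont : Continuous (mvGaussianPDFReal μ S) := by
    unfold mvGaussianPDFReal
    fun_prop
  exact h_cont.measurable

lemma mvGaussianPDFReal_add_mulVec (μ b : Fin N → ℝ) (S : Matrix (Fin N) (Fin N) ℝ)
    {A : Matrix (Fin N) (Fin N) ℝ} (hA : A.det ≠ 0) (x : Fin N → ℝ) :
    |A.det| * mvGaussianPDFReal (b + A *ᵥ μ) (A * S * Aᵀ) (b + A *ᵥ x) =
      mvGaussianPDFReal μ S x := by
  have h_det : √((2 * Real.pi) ^ N * (A * S * Aᵀ).det) =
      |A.det| * √((2 * Real.pi) ^ N * S.det) := by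
    rw [det_mul, det_mul, det_transpose, ← Real.sqrt_sq_eq_abs, ← Real.sqrt_mul (sq_nonneg _)]
    ring_nf
  rw [mvGaussianPDFReal, add_sub_add_left_eq_sub, ← mulVec_sub,
    mulVec_dotProduct_inv_mulVec hA.isUnit, h_det, mul_inv, mul_assoc,
    mul_inv_cancel_left₀ (abs_ne_zero.mpr hA), mvGaussianPDFReal]

lemma map_add_mulVec_mvGaussian (μ b : Fin N → ℝ) (S : Matrix (Fin N) (Fin N) ℝ)
    {A : Matrix (Fin N) (Fin N) ℝ} (hA : A.det ≠ 0) :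
    (mvGaussian μ S).map (fun x ↦ b + A *ᵥ x) = mvGaussian (b + A *ᵥ μ) (A * S * Aᵀ) := by
  set T : (Fin N → ℝ) → Fin N → ℝ := fun x ↦ b + A *ᵥ x
  set p : (Fin N → ℝ) → ℝ≥0∞ :=
    fun y ↦ ENNReal.ofReal (mvGaussianPDFReal (b + A *ᵥ μ) (A * S * Aᵀ) y)
  have hT : Measurable T := Continuous.measurable (by fun_prop)
  have hp : Measurable p := by fun_prop
  have h_pullback : mvGaussian μ S = ENNReal.ofReal |A.det| • volume.withDensity (p ∘ T) := by
    rw [← withDensity_smul _ (hp.comp hT), mvGaussian_eq_withDensity]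
    congr with x
    rw [← mvGaussianPDFReal_add_mulVec μ b S hA, ENNReal.ofReal_mul (abs_nonneg _)]
    rfl
  rw [h_pullback, Measure.map_smul, map_withDensity_comp _ hT hp, map_add_mulVec_volume b hA,
    withDensity_smul_measure, smul_smul, ← ENNReal.ofReal_mul (abs_nonneg _), ← abs_mul,
    mul_inv_cancel₀ hA, abs_one, ENNReal.ofReal_one, one_smul, mvGaussian_eq_withDensity]

end Density

section StandardGaussian

lemma pi_gaussianReal_eq_withDensity {ι : Type*} [Fintype ι] (m : ι → ℝ) {v : ι → NNReal}
    (hv : ∀ i, v i ≠ 0) :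
    Measure.pi (fun i ↦ gaussianReal (m i) (v i)) =
      volume.withDensity fun x ↦ ENNReal.ofReal (∏ i, gaussianPDFReal (m i) (v i) (x i)) := by
  refine Measure.pi_eq fun s hs ↦ ?_
  rw [withDensity_apply _ (MeasurableSet.univ_pi hs), volume_pi, Measure.restrict_pi_pi,
    ← ofReal_integral_eq_lintegral_ofReal, integral_fintype_prod_eq_prod,
    ENNReal.ofReal_prod_of_nonneg]
  · simp_rw [gaussianReal_apply_eq_integral _ (hv _)]
  · exact fun i _ ↦ integral_nonneg (gaussianPDFReal_nonneg _ _)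
  · exact Integrable.fintype_prod fun i ↦ (integrable_gaussianPDFReal _ _).restrict
  · exact ae_of_all _ fun x ↦ Finset.prod_nonneg fun i _ ↦ gaussianPDFReal_nonneg _ _ _

variable {N : ℕ}

lemma prod_gaussianPDFReal_zero_one (x : Fin N → ℝ) :
    ∏ i, gaussianPDFReal 0 1 (x i) = mvGaussianPDFReal 0 1 x := by
  have h_sqrt : √((2 * Real.pi) ^ N) = √(2 * Real.pi) ^ N := by
    rw [Real.sqrt_eq_rpow, Real.sqrt_eq_rpow, Real.rpow_pow_comm (by positivity)]
  have h_exponent : ∑ i, -x i ^ 2 / 2 = -(1 / 2) * (x ⬝ᵥ x) := by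
    rw [dotProduct, Finset.mul_sum]
    exact Finset.sum_congr rfl fun i _ ↦ by ring
  simp only [gaussianPDFReal, mvGaussianPDFReal, Finset.prod_mul_distrib, ← Real.exp_sum,
    NNReal.coe_one, mul_one, sub_zero, Finset.prod_const, Finset.card_univ, Fintype.card_fin,
    inv_one, one_mulVec, det_one, h_sqrt, h_exponent, inv_pow]

lemma mvGaussian_zero_one :
    mvGaussian (0 : Fin N → ℝ) 1 = Measure.pi fun _ ↦ gaussianReal 0 1 := by
  simp_rw [pi_gaussianReal_eq_withDensity _ fun _ ↦ one_ne_zero, prod_gaussianPDFReal_zero_one,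
    mvGaussian_eq_withDensity]

end StandardGaussian

section LinearStatistics

open scoped MatrixOrder in
lemma map_toLp_mvGaussian {N : ℕ} (μ : Fin N → ℝ) {S : Matrix (Fin N) (Fin N) ℝ}
    (hS : S.PosDef) : (mvGaussian μ S).map (toLp 2) = multivariateGaussian (toLp 2 μ) S := by
  set A := CFC.sqrt S
  have hA_sq : A * A = S := CFC.sqrt_mul_sqrt_self _ hS.posSemidef.nonneg
  have hA_symm : Aᵀ = A := by
    rw [← conjTranspose_eq_transpose_of_trivial]
    exact (CFC.sqrt_nonneg S).isSelfAdjoint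
  have hA_det : A.det ≠ 0 := by
    intro h
    exact hS.det_pos.ne' (by rw [← hA_sq, det_mul, h, zero_mul])
  have h_mvGaussian : mvGaussian μ S =
      (Measure.pi fun _ ↦ gaussianReal 0 1).map (fun x ↦ μ + A *ᵥ x) := by
    rw [← mvGaussian_zero_one, map_add_mulVec_mvGaussian 0 μ 1 hA_det, mulVec_zero, add_zero,
      Matrix.mul_one, hA_symm, hA_sq]
  rw [h_mvGaussian, multivariateGaussian, ← map_pi_eq_stdGaussian,
    Measure.map_map (by fun_prop) (Continuous.measurable (by fun_prop)),
    Measure.map_map (by fun_prop) (by fun_prop)]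
  rfl

lemma map_inner_multivariateGaussian {ι : Type*} [Fintype ι] [DecidableEq ι]
    (w μ : EuclideanSpace ℝ ι) {S : Matrix ι ι ℝ} (hS : S.PosSemidef) :
    (multivariateGaussian μ S).map (fun x ↦ ⟪w, x⟫) =
      gaussianReal ⟪w, μ⟫ (w ⬝ᵥ S *ᵥ w).toNNReal := by
  have h_inner : (fun x ↦ ⟪w, x⟫) = innerSL ℝ w := rfl
  rw [h_inner, IsGaussian.map_eq_gaussianReal,
    (innerSL ℝ w).integral_comp_id_comm IsGaussian.integrable_id,
    integral_id_multivariateGaussian, ← covarianceBilin_multivariateGaussian (μ := μ) hS,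
    covarianceBilin_self IsGaussian.memLp_two_id]
  rfl

lemma gaussianReal_Ici (m : ℝ) {v : NNReal} (hv : v ≠ 0) (c : ℝ) :
    gaussianReal m v (Set.Ici c) = ENNReal.ofReal (gaussQ ((c - m) / √v)) := by
  have h_sqrt : 0 < √(v : ℝ) := Real.sqrt_pos.mpr (by positivity)
  have h_std : (gaussianReal m v).map (fun x ↦ (x - m) / √v) = gaussianReal 0 1 := by
    have h_comp : (fun x ↦ (x - m) / √v) = (· / √v) ∘ (· - m) := rfl
    rw [h_comp, ← Measure.map_map (by fun_prop) (by fun_prop), gaussianReal_map_sub_const,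
      gaussianReal_map_div_const, sub_self, zero_div]
    congr 1
    ext
    simp [hv]
  have h_preimage : Set.Ici c = (fun x ↦ (x - m) / √v) ⁻¹' Set.Ici ((c - m) / √v) := by
    ext x
    simp [div_le_div_iff_of_pos_right h_sqrt]
  rw [h_preimage, ← Measure.map_apply (by fun_prop) measurableSet_Ici, h_std,
    gaussianReal_apply_eq_integral 0 one_ne_zero, gaussQ, ← integral_const_mul]
  simp [gaussianPDFReal]

variable {N : ℕ} (μ : Fin N → ℝ) {S : Matrix (Fin N) (Fin N) ℝ}

lemma map_dotProduct_mvGaussian (w : Fin N → ℝ) (hS : S.PosDef) :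
    (mvGaussian μ S).map (w ⬝ᵥ ·) = gaussianReal (w ⬝ᵥ μ) (w ⬝ᵥ S *ᵥ w).toNNReal := by
  have h_inner (x : Fin N → ℝ) : w ⬝ᵥ x = ⟪toLp 2 w, toLp 2 x⟫ := by
    rw [EuclideanSpace.inner_toLp_toLp, star_trivial, dotProduct_comm]
  have h_comp : (w ⬝ᵥ ·) = (fun x ↦ ⟪toLp 2 w, x⟫) ∘ toLp 2 := funext h_inner
  rw [h_comp, ← Measure.map_map (by fun_prop) (by fun_prop), map_toLp_mvGaussian μ hS,
    map_inner_multivariateGaussian _ _ hS.posSemidef, ← h_inner]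

lemma mvGaussian_halfspace {w : Fin N → ℝ} (hw : w ≠ 0) (hS : S.PosDef) (c : ℝ) :
    mvGaussian μ S {y | c ≤ w ⬝ᵥ y} =
      ENNReal.ofReal (gaussQ ((c - w ⬝ᵥ μ) / √(w ⬝ᵥ S *ᵥ w))) := by
  have h_var : 0 < w ⬝ᵥ S *ᵥ w := hS.dotProduct_mulVec_pos hw
  have h_meas : Measurable (w ⬝ᵥ ·) := Continuous.measurable (by fun_prop)
  change mvGaussian μ S ((w ⬝ᵥ ·) ⁻¹' Set.Ici c) = _
  rw [← Measure.map_apply h_meas measurableSet_Ici, map_dotProduct_mvGaussian μ w hS,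
    gaussianReal_Ici _ (Real.toNNReal_pos.mpr h_var).ne', Real.coe_toNNReal _ h_var.le]

lemma mvGaussian_inv_halfspace {d : Fin N → ℝ} (hd : d ≠ 0) (hS : S.PosDef) (c : ℝ) :
    mvGaussian μ S {y | c ≤ d ⬝ᵥ S⁻¹ *ᵥ y} =
      ENNReal.ofReal (gaussQ ((c - d ⬝ᵥ S⁻¹ *ᵥ μ) / √(d ⬝ᵥ S⁻¹ *ᵥ d))) := by
  have hS_unit : IsUnit S.det := hS.det_pos.ne'.isUnit
  have h_cancel : (d ᵥ* S⁻¹) ᵥ* S = d := by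
    rw [vecMul_vecMul, nonsing_inv_mul _ hS_unit, vecMul_one]
  have hw : d ᵥ* S⁻¹ ≠ 0 := fun h ↦ hd (by rw [← h_cancel, h, zero_vecMul])
  have h_var : (d ᵥ* S⁻¹) ⬝ᵥ S *ᵥ (d ᵥ* S⁻¹) = d ⬝ᵥ S⁻¹ *ᵥ d := by
    rw [dotProduct_mulVec, h_cancel, dotProduct_comm, dotProduct_mulVec]
  simp_rw [dotProduct_mulVec d S⁻¹, mvGaussian_halfspace μ hw hS, h_var, dotProduct_mulVec d S⁻¹]

end LinearStatistics

/-- Theorem 2: with `q = (Δv−Δu)ᵀ D⁻¹ (Δv−Δu) > 0` and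
`Γ = ln λ + (1/2)(Δv−Δu)ᵀ D⁻¹ (Δv+Δu)`, the false positive rate of the test
`(Δv−Δu)ᵀ D⁻¹ Δy ≥ Γ` under `Δy ∼ N(Δu,D)` is `Q((ln λ + q/2)/√q)` and the
detection rate under `Δy ∼ N(Δv,D)` is `Q((ln λ − q/2)/√q)`. -/
theorem drss_lvs_false_positive_and_detection_rates
    (n : ℕ) (R : Matrix (Fin (n + 2)) (Fin (n + 2)) ℝ)
    (hRsymm : R.IsSymm) (hRpd : R.PosDef)
    (u v : Fin (n + 2) → ℝ) (hvu : diffVec v ≠ diffVec u)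
    (lam : ℝ) (hlam : 0 < lam) :
    let D := diffMatrix R
    let q : ℝ := (diffVec v - diffVec u) ⬝ᵥ (D⁻¹).mulVec (diffVec v - diffVec u)
    let Γ : ℝ := Real.log lam
      + (1 / 2) * ((diffVec v - diffVec u) ⬝ᵥ (D⁻¹).mulVec (diffVec v + diffVec u))
    0 < q ∧
      (mvGaussian (diffVec u) D) {dy | Γ ≤ (diffVec v - diffVec u) ⬝ᵥ (D⁻¹).mulVec dy}
        = ENNReal.ofReal (gaussQ ((Real.log lam + q / 2) / Real.sqrt q)) ∧
      (mvGaussian (diffVec v) D) {dy | Γ ≤ (diffVec v - diffVec u) ⬝ᵥ (D⁻¹).mulVec dy}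
        = ENNReal.ofReal (gaussQ ((Real.log lam - q / 2) / Real.sqrt q)) := by
  intro D q Γ
  have hD : D.PosDef := diffMatrix_posDef hRpd
  have hd : diffVec v - diffVec u ≠ 0 := sub_ne_zero.mpr hvu
  have hΓu : Γ - (diffVec v - diffVec u) ⬝ᵥ D⁻¹ *ᵥ diffVec u = Real.log lam + q / 2 := by
    simp only [Γ, q, mulVec_add, mulVec_sub, dotProduct_add, dotProduct_sub]
    ring
  have hΓv : Γ - (diffVec v - diffVec u) ⬝ᵥ D⁻¹ *ᵥ diffVec v = Real.log lam - q / 2 := by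
    simp only [Γ, q, mulVec_add, mulVec_sub, dotProduct_add, dotProduct_sub]
    ring
  refine ⟨hD.inv.dotProduct_mulVec_pos hd, ?_, ?_⟩
  · rw [mvGaussian_inv_halfspace _ hd hD, hΓu]
  · rw [mvGaussian_inv_halfspace _ hd hD, hΓv]
end

section
/- Let N ≥ 2, let g ∈ ℝ^N, let Δg ∈ ℝ^{N−1} be defined by (Δg)_m = g_m − g_N, and let D₀ = I_{N−1} + J where J is the (N−1)×(N−1) all-ones matrix. Then (Δg)ᵀ D₀⁻¹ (Δg) = ∑_{i=1}^N g_i² − (1/N)·(∑_{i=1}^N g_i)². -/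
open Matrix

/-!
The Sherman–Morrison formula for `I + 𝟙𝟙ᵀ` turns the quadratic form into
`∑ₘ (Δg)ₘ² - N⁻¹ (∑ₘ (Δg)ₘ)²`. Including the base coordinate, whose difference is zero, makes both
sums run over all `N` coordinates of the translate `g - g_N`, and `∑ gᵢ² - N⁻¹ (∑ gᵢ)²` does not
change when all coordinates are translated by the same amount.
-/

section

open scoped Ring

variable {ι R : Type*} [Fintype ι] [CommRing R]

theorem inv_one_add_vecMulVec [DecidableEq ι] {u v : ι → R} (h : IsUnit (1 + v ⬝ᵥ u)) :
    (1 + vecMulVec u v)⁻¹ = 1 - (1 + v ⬝ᵥ u)⁻¹ʳ • vecMulVec u v := by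
  refine Matrix.inv_eq_right_inv ?_
  calc (1 + vecMulVec u v) * (1 - (1 + v ⬝ᵥ u)⁻¹ʳ • vecMulVec u v)
      = 1 + (1 - (1 + v ⬝ᵥ u)⁻¹ʳ * (1 + v ⬝ᵥ u)) • vecMulVec u v := by
        simp only [add_mul, mul_sub, one_mul, mul_one, Matrix.mul_smul,
          vecMulVec_mul_vecMulVec, vecMulVec_smul, smul_smul]
        module
    _ = 1 := by rw [Ring.inverse_mul_cancel _ h, sub_self, zero_smul, add_zero]

theorem dotProduct_inv_one_add_vecMulVec_mulVec [DecidableEq ι] {u v : ι → R}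
    (h : IsUnit (1 + v ⬝ᵥ u)) (x y : ι → R) :
    x ⬝ᵥ (1 + vecMulVec u v)⁻¹ *ᵥ y = x ⬝ᵥ y - (1 + v ⬝ᵥ u)⁻¹ʳ * (x ⬝ᵥ u * v ⬝ᵥ y) := by
  rw [inv_one_add_vecMulVec h, sub_mulVec, one_mulVec, smul_mulVec, vecMulVec_mulVec,
    dotProduct_sub, dotProduct_smul, smul_eq_mul, dotProduct_smul, op_smul_eq_mul]

theorem card_mul_sum_sub_sq_sub_sq_sum_sub (g : ι → R) (c : R) :
    Fintype.card ι * ∑ i, (g i - c) ^ 2 - (∑ i, (g i - c)) ^ 2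
      = Fintype.card ι * ∑ i, g i ^ 2 - (∑ i, g i) ^ 2 := by
  simp only [sub_sq, Finset.sum_add_distrib, Finset.sum_sub_distrib, ← Finset.sum_mul,
    ← Finset.mul_sum, Finset.sum_const, Finset.card_univ, nsmul_eq_mul]
  ring

theorem sum_sub_sq_sub_inverse_card_mul_sq_sum_sub (h : IsUnit (Fintype.card ι : R))
    (g : ι → R) (c : R) :
    ∑ i, (g i - c) ^ 2 - (Fintype.card ι : R)⁻¹ʳ * (∑ i, (g i - c)) ^ 2
      = ∑ i, g i ^ 2 - (Fintype.card ι : R)⁻¹ʳ * (∑ i, g i) ^ 2 := by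
  refine h.mul_left_cancel ?_
  simpa only [mul_sub, Ring.mul_inverse_cancel_left _ _ h] using
    card_mul_sum_sub_sq_sub_sq_sum_sub g c

/-- The index `none` plays the role of the base coordinate `N`. -/
theorem diff_quadratic_form_identity_uncorrelated_general [DecidableEq ι]
    (hN : IsUnit (Fintype.card (Option ι) : R)) (g : Option ι → R) :
    let Δg : ι → R := fun m => g (some m) - g none
    let J : Matrix ι ι R := fun _ _ => 1
    Δg ⬝ᵥ (1 + J)⁻¹ *ᵥ Δg
      = ∑ i, g i ^ 2 - (Fintype.card (Option ι) : R)⁻¹ʳ * (∑ i, g i) ^ 2 := by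
  intro Δg J
  have hJ : J = vecMulVec 1 1 := by ext; simp [J, vecMulVec_apply]
  have hcard : 1 + (1 : ι → R) ⬝ᵥ 1 = Fintype.card (Option ι) := by simp [add_comm]
  calc Δg ⬝ᵥ (1 + J)⁻¹ *ᵥ Δg
      = Δg ⬝ᵥ Δg - (Fintype.card (Option ι) : R)⁻¹ʳ * (∑ m, Δg m) ^ 2 := by
        rw [hJ, dotProduct_inv_one_add_vecMulVec_mulVec (hcard ▸ hN), hcard, dotProduct_one,
          one_dotProduct, ← sq]
    _ = ∑ i, (g i - g none) ^ 2
          - (Fintype.card (Option ι) : R)⁻¹ʳ * (∑ i, (g i - g none)) ^ 2 := by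
        simp only [Fintype.sum_option, dotProduct, Δg, sub_self, sq, mul_zero, zero_add]
    _ = ∑ i, g i ^ 2 - (Fintype.card (Option ι) : R)⁻¹ʳ * (∑ i, g i) ^ 2 :=
        sum_sub_sq_sub_inverse_card_mul_sq_sum_sub hN g (g none)

end

/-- with `D₀ = I + J` (`J` the all-ones `(N−1)×(N−1)` matrix, `N = n+2`),
`(Δg)ᵀ D₀⁻¹ (Δg) = ∑ g_i² − (1/N)(∑ g_i)²`. -/
theorem diff_quadratic_form_identity_uncorrelated
    (n : ℕ) (g : Fin (n + 2) → ℝ) :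
    let J : Matrix (Fin (n + 1)) (Fin (n + 1)) ℝ := fun _ _ => (1 : ℝ)
    let D₀ : Matrix (Fin (n + 1)) (Fin (n + 1)) ℝ := 1 + J
    diffVec g ⬝ᵥ (D₀⁻¹).mulVec (diffVec g)
      = (∑ i, g i ^ 2) - (((n : ℝ) + 2)⁻¹) * (∑ i, g i) ^ 2 := by
  unfold diffVec
  simpa [finSuccEquivLast.symm.sum_comp g, finSuccEquivLast.symm.sum_comp (g · ^ 2), add_assoc,
    one_add_one_eq_two] using diff_quadratic_form_identity_uncorrelated_general
      (Nat.cast_ne_zero.2 Fintype.card_ne_zero).isUnit (g ∘ finSuccEquivLast.symm)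
end

section
/- Let N ≥ 2, let R be an N×N real symmetric positive-definite matrix, let D be the (N−1)×(N−1) difference covariance matrix with entries D_{mn} = R_{NN} + R_{mn} − R_{mN} − R_{nN}, let 1_N ∈ ℝ^N be the all-ones vector, and let g ∈ ℝ^N with difference vector Δg ∈ ℝ^{N−1}. Then gᵀ R⁻¹ g − (1_Nᵀ R⁻¹ g)² / (1_Nᵀ R⁻¹ 1_N) = (Δg)ᵀ D⁻¹ (Δg). Equivalently, writing w' = g − ((1_Nᵀ R⁻¹ g)/(1_Nᵀ R⁻¹ 1_N))·1_N, one has (w')ᵀ R⁻¹ (w') = (Δg)ᵀ D⁻¹ (Δg). -/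
open Matrix

/-!
The differencing operator `A` satisfies `Δg = A g` and `D = A R Aᵀ`, and `Aᵀ` maps `ℝ^{N−1}`
bijectively onto the hyperplane `1^⊥`. Removing from `g` its component along `1`, so that the rest
`w'` has `1ᵀ R⁻¹ w' = 0`, does not change `Δg`. Now `R⁻¹ w'` lies in `1^⊥`, hence `R⁻¹ w' = Aᵀ z`
for some `z`; applying `A R` gives `Δg = D z`, and therefore
`w'ᵀ R⁻¹ w' = w'ᵀ Aᵀ z = Δgᵀ z = Δgᵀ D⁻¹ Δg`. Invertibility of `D` needs only `1ᵀ R⁻¹ 1 ≠ 0`: if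
`D z = 0`, then `R Aᵀ z` lies in `ker A`, so `Aᵀ z = c R⁻¹ 1`, and pairing with `1` gives `c = 0`.
-/

section GLSResidual

variable {K n : Type*} [Field K] [Fintype n]

/-- The residual `g − ((uᵀ S g) / (uᵀ S u)) u` of the generalized least-squares fit of `g` by a
multiple of `u`, with weight matrix `S`; it is the component of `g` that is `S`-orthogonal to `u`.
It equals `g` when `uᵀ S u = 0`. -/
def glsResidual (S : Matrix n n K) (u g : n → K) : n → K :=
  g - ((u ⬝ᵥ S *ᵥ g) / (u ⬝ᵥ S *ᵥ u)) • u

lemma dotProduct_mulVec_glsResidual {S : Matrix n n K} {u : n → K} (hu : u ⬝ᵥ S *ᵥ u ≠ 0)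
    (g : n → K) : u ⬝ᵥ S *ᵥ glsResidual S u g = 0 := by
  simp [glsResidual, mulVec_sub, mulVec_smul, dotProduct_sub, hu]

lemma glsResidual_dotProduct_mulVec_glsResidual {S : Matrix n n K} (hS : S.IsSymm) {u : n → K}
    (hu : u ⬝ᵥ S *ᵥ u ≠ 0) (g : n → K) :
    glsResidual S u g ⬝ᵥ S *ᵥ glsResidual S u g =
      g ⬝ᵥ S *ᵥ g - (u ⬝ᵥ S *ᵥ g) ^ 2 / (u ⬝ᵥ S *ᵥ u) := by
  have hcomm : g ⬝ᵥ S *ᵥ u = u ⬝ᵥ S *ᵥ g := by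
    simpa only [hS.eq] using dotProduct_transpose_mulVec S g u
  calc glsResidual S u g ⬝ᵥ S *ᵥ glsResidual S u g
      = g ⬝ᵥ S *ᵥ glsResidual S u g := by
        conv_lhs => enter [1]; rw [glsResidual]
        rw [sub_dotProduct, smul_dotProduct, dotProduct_mulVec_glsResidual hu, smul_zero, sub_zero]
    _ = g ⬝ᵥ S *ᵥ g - (u ⬝ᵥ S *ᵥ g) ^ 2 / (u ⬝ᵥ S *ᵥ u) := by
        simp only [glsResidual, mulVec_sub, mulVec_smul, dotProduct_sub, dotProduct_smul,
          smul_eq_mul, hcomm]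
        ring

lemma mulVec_glsResidual {m : Type*} {A : Matrix m n K} {u : n → K} (hAu : A *ᵥ u = 0)
    (S : Matrix n n K) (g : n → K) : A *ᵥ glsResidual S u g = A *ᵥ g := by
  rw [glsResidual, mulVec_sub, mulVec_smul, hAu, smul_zero, sub_zero]

end GLSResidual

section ExactTranspose

variable {K m n : Type*} [Fintype m] [Fintype n]

lemma mulVec_eq_zero_of_exact_transpose [CommRing K] {A : Matrix m n K} {u : n → K}
    (hA : Function.Exact (Aᵀ *ᵥ ·) (u ⬝ᵥ ·)) : A *ᵥ u = 0 :=
  dotProduct_eq_zero _ fun z => by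
    rw [dotProduct_comm, ← dotProduct_transpose_mulVec]
    exact hA.apply_apply_eq_zero z

lemma eq_smul_of_mulVec_eq_zero_of_exact_transpose [Field K] {A : Matrix m n K} {u : n → K}
    (hA : Function.Exact (Aᵀ *ᵥ ·) (u ⬝ᵥ ·)) {a : n → K} (ha : u ⬝ᵥ a ≠ 0) {x : n → K}
    (hx : A *ᵥ x = 0) : x = ((x ⬝ᵥ a) / (u ⬝ᵥ a)) • u := by
  refine dotProduct_eq _ _ fun v => ?_
  -- Subtracting a multiple of `a` moves `v` into the hyperplane `u^⊥ = range Aᵀ`, which `x` kills.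
  obtain ⟨z, hz⟩ : v - ((u ⬝ᵥ v) / (u ⬝ᵥ a)) • a ∈ Set.range (Aᵀ *ᵥ ·) :=
    (hA _).1 (by simp [dotProduct_sub, ha])
  have hxz : x ⬝ᵥ (v - ((u ⬝ᵥ v) / (u ⬝ᵥ a)) • a) = 0 := by
    rw [← hz, dotProduct_transpose_mulVec, hx, dotProduct_zero]
  rw [dotProduct_sub, dotProduct_smul, sub_eq_zero] at hxz
  rw [hxz, smul_dotProduct, smul_eq_mul, smul_eq_mul]
  ring

lemma isUnit_mul_mul_transpose_of_exact_transpose [Field K] [DecidableEq m] [DecidableEq n]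
    {R : Matrix n n K} (hR : IsUnit R) {A : Matrix m n K} {u : n → K}
    (hA : Function.Exact (Aᵀ *ᵥ ·) (u ⬝ᵥ ·)) (hA_inj : Function.Injective (Aᵀ *ᵥ ·))
    (hu : u ⬝ᵥ R⁻¹ *ᵥ u ≠ 0) : IsUnit (A * R * Aᵀ) := by
  have hRdet : IsUnit R.det := (isUnit_iff_isUnit_det R).1 hR
  refine mulVec_injective_iff_isUnit.1 <|
    (injective_iff_map_eq_zero (A * R * Aᵀ).mulVecLin).2 fun z hz => ?_
  obtain ⟨c, hc⟩ : ∃ c : K, R *ᵥ Aᵀ *ᵥ z = c • u :=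
    ⟨_, eq_smul_of_mulVec_eq_zero_of_exact_transpose hA hu <| by
      simpa only [mulVecLin_apply, mulVec_mulVec, Matrix.mul_assoc] using hz⟩
  have hAz : Aᵀ *ᵥ z = c • R⁻¹ *ᵥ u := by
    rw [← mulVec_smul, ← hc, mulVec_mulVec, nonsing_inv_mul _ hRdet, one_mulVec]
  have hc0 : c = 0 := by
    have huAz : u ⬝ᵥ Aᵀ *ᵥ z = 0 := hA.apply_apply_eq_zero z
    rw [hAz, dotProduct_smul, smul_eq_mul] at huAz
    exact (mul_eq_zero.1 huAz).resolve_right hu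
  refine hA_inj ?_
  simp only [hAz, hc0, zero_smul, mulVec_zero]

lemma dotProduct_inv_mulVec_eq_of_mem_range_transpose [CommRing K] [DecidableEq m] [DecidableEq n]
    {R : Matrix n n K} (hR : IsUnit R) {A : Matrix m n K} (hD : IsUnit (A * R * Aᵀ)) {w : n → K}
    (hw : R⁻¹ *ᵥ w ∈ Set.range (Aᵀ *ᵥ ·)) :
    w ⬝ᵥ R⁻¹ *ᵥ w = (A *ᵥ w) ⬝ᵥ (A * R * Aᵀ)⁻¹ *ᵥ (A *ᵥ w) := by
  obtain ⟨z, hz : Aᵀ *ᵥ z = R⁻¹ *ᵥ w⟩ := hw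
  have hDz : (A * R * Aᵀ) *ᵥ z = A *ᵥ w := by
    rw [← mulVec_mulVec, hz, mulVec_mulVec, Matrix.mul_assoc,
      mul_nonsing_inv _ ((isUnit_iff_isUnit_det R).1 hR), Matrix.mul_one]
  calc w ⬝ᵥ R⁻¹ *ᵥ w
      = (A *ᵥ w) ⬝ᵥ z := by rw [← hz, dotProduct_transpose_mulVec, dotProduct_comm]
    _ = (A *ᵥ w) ⬝ᵥ (A * R * Aᵀ)⁻¹ *ᵥ (A *ᵥ w) := by
      rw [← hDz, mulVec_mulVec _ _ (A * R * Aᵀ),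
        nonsing_inv_mul _ ((isUnit_iff_isUnit_det _).1 hD), one_mulVec]

theorem rss_drss_quadratic_form_identity_general [Field K] [DecidableEq m] [DecidableEq n]
    {R : Matrix n n K} (hRsymm : R.IsSymm) (hR : IsUnit R) {A : Matrix m n K} {u : n → K}
    (hA : Function.Exact (Aᵀ *ᵥ ·) (u ⬝ᵥ ·)) (hA_inj : Function.Injective (Aᵀ *ᵥ ·))
    (hu : u ⬝ᵥ R⁻¹ *ᵥ u ≠ 0) (g : n → K) :
    (g ⬝ᵥ R⁻¹ *ᵥ g - (u ⬝ᵥ R⁻¹ *ᵥ g) ^ 2 / (u ⬝ᵥ R⁻¹ *ᵥ u) =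
        (A *ᵥ g) ⬝ᵥ (A * R * Aᵀ)⁻¹ *ᵥ (A *ᵥ g)) ∧
      glsResidual R⁻¹ u g ⬝ᵥ R⁻¹ *ᵥ glsResidual R⁻¹ u g =
        (A *ᵥ g) ⬝ᵥ (A * R * Aᵀ)⁻¹ *ᵥ (A *ᵥ g) := by
  have hresidual : glsResidual R⁻¹ u g ⬝ᵥ R⁻¹ *ᵥ glsResidual R⁻¹ u g =
      (A *ᵥ g) ⬝ᵥ (A * R * Aᵀ)⁻¹ *ᵥ (A *ᵥ g) := by
    have hrange : R⁻¹ *ᵥ glsResidual R⁻¹ u g ∈ Set.range (Aᵀ *ᵥ ·) :=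
      (hA _).1 (dotProduct_mulVec_glsResidual hu g)
    rw [dotProduct_inv_mulVec_eq_of_mem_range_transpose hR
        (isUnit_mul_mul_transpose_of_exact_transpose hR hA hA_inj hu) hrange,
      mulVec_glsResidual (mulVec_eq_zero_of_exact_transpose hA)]
  exact ⟨(glsResidual_dotProduct_mulVec_glsResidual hRsymm.inv hu g).symm.trans hresidual,
    hresidual⟩

end ExactTranspose

section DiffOp

/-- The differencing operator `g ↦ (g_m − g_N)_{m < N}` on `K^N` as a matrix, with `N = n + 1`
and the reference coordinate `N` encoded as `Fin.last n`. -/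
def diffOp (K : Type*) [Ring K] (n : ℕ) : Matrix (Fin n) (Fin (n + 1)) K :=
  Matrix.of fun m => Pi.single m.castSucc 1 - Pi.single (Fin.last n) 1

variable {K : Type*}

lemma diffOp_mulVec_apply [Ring K] {n : ℕ} (g : Fin (n + 1) → K) (m : Fin n) :
    (diffOp K n *ᵥ g) m = g m.castSucc - g (Fin.last n) := by
  change (Pi.single m.castSucc 1 - Pi.single (Fin.last n) 1) ⬝ᵥ g = _
  rw [sub_dotProduct, single_one_dotProduct, single_one_dotProduct]

lemma diffOp_mul_mul_transpose_apply [CommRing K] {n : ℕ}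
    (R : Matrix (Fin (n + 1)) (Fin (n + 1)) K) (m k : Fin n) :
    (diffOp K n * R * (diffOp K n)ᵀ) m k =
      R m.castSucc k.castSucc - R (Fin.last n) k.castSucc -
        (R m.castSucc (Fin.last n) - R (Fin.last n) (Fin.last n)) := by
  have hcol (j : Fin (n + 1)) :
      (diffOp K n * R) m j = R m.castSucc j - R (Fin.last n) j :=
    diffOp_mulVec_apply (fun i => R i j) m
  rw [← hcol, ← hcol, ← diffOp_mulVec_apply, ← vecMul_transpose]
  rfl

lemma diffOp_transpose_mulVec [Ring K] {n : ℕ} (z : Fin n → K) :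
    (diffOp K n)ᵀ *ᵥ z = Fin.snoc z (-∑ i, z i) := by
  ext j
  refine Fin.lastCases ?_ (fun m => ?_) j <;>
    simp [diffOp, mulVec, dotProduct, Pi.single_apply]

lemma diffOp_transpose_mulVec_injective [Ring K] (n : ℕ) :
    Function.Injective ((diffOp K n)ᵀ *ᵥ ·) := by
  intro z z' h
  simp only [diffOp_transpose_mulVec] at h
  exact (Fin.snoc_inj.1 h).1

lemma exact_diffOp_transpose [Ring K] (n : ℕ) :
    Function.Exact ((diffOp K n)ᵀ *ᵥ ·) ((fun _ => 1 : Fin (n + 1) → K) ⬝ᵥ ·) := by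
  intro y
  simp only [dotProduct, one_mul, Fin.sum_univ_castSucc, Set.mem_range, diffOp_transpose_mulVec]
  constructor
  · intro hy
    refine ⟨Fin.init y, ?_⟩
    rw [← Fin.snoc_init_self y]
    simp [Fin.init, neg_eq_of_add_eq_zero_right hy]
  · rintro ⟨z, rfl⟩
    simp

lemma diffVec_eq_diffOp_mulVec {n : ℕ} (g : Fin (n + 2) → ℝ) :
    diffVec g = diffOp ℝ (n + 1) *ᵥ g :=
  funext fun m => (diffOp_mulVec_apply g m).symm

lemma diffMatrix_eq_diffOp_mul_mul_transpose {n : ℕ} {R : Matrix (Fin (n + 2)) (Fin (n + 2)) ℝ}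
    (hR : R.IsSymm) : diffMatrix R = diffOp ℝ (n + 1) * R * (diffOp ℝ (n + 1))ᵀ := by
  ext m k
  rw [diffOp_mul_mul_transpose_apply, diffMatrix, hR.apply k.castSucc (Fin.last (n + 1))]
  ring

end DiffOp

/-- `gᵀ R⁻¹ g − (1ᵀ R⁻¹ g)²/(1ᵀ R⁻¹ 1) = (Δg)ᵀ D⁻¹ (Δg)`; equivalently,
with `w' = g − ((1ᵀ R⁻¹ g)/(1ᵀ R⁻¹ 1))·1`, `(w')ᵀ R⁻¹ (w') = (Δg)ᵀ D⁻¹ (Δg)`. -/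
theorem rss_drss_quadratic_form_identity
    (n : ℕ) (R : Matrix (Fin (n + 2)) (Fin (n + 2)) ℝ)
    (hRsymm : R.IsSymm) (hRpd : R.PosDef) (g : Fin (n + 2) → ℝ) :
    let D := diffMatrix R
    let ones : Fin (n + 2) → ℝ := fun _ => (1 : ℝ)
    let w' : Fin (n + 2) → ℝ :=
      g - ((ones ⬝ᵥ (R⁻¹).mulVec g) / (ones ⬝ᵥ (R⁻¹).mulVec ones)) • ones
    (g ⬝ᵥ (R⁻¹).mulVec g
        - (ones ⬝ᵥ (R⁻¹).mulVec g) ^ 2 / (ones ⬝ᵥ (R⁻¹).mulVec ones)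
      = diffVec g ⬝ᵥ (D⁻¹).mulVec (diffVec g)) ∧
      w' ⬝ᵥ (R⁻¹).mulVec w' = diffVec g ⬝ᵥ (D⁻¹).mulVec (diffVec g) := by
  have hones : (fun _ => 1 : Fin (n + 2) → ℝ) ⬝ᵥ R⁻¹ *ᵥ (fun _ => 1) ≠ 0 := by
    simpa only [star_trivial] using
      (hRpd.inv.dotProduct_mulVec_pos (x := fun _ => 1) (Function.const_ne_zero.2 one_ne_zero)).ne'
  simp only [diffVec_eq_diffOp_mulVec, diffMatrix_eq_diffOp_mul_mul_transpose hRsymm]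
  exact rss_drss_quadratic_form_identity_general hRsymm hRpd.isUnit (exact_diffOp_transpose _)
    (diffOp_transpose_mulVec_injective _) hones g
end

section
/- (Theorem 3.) Let N ≥ 2, let R be an N×N real symmetric positive-definite matrix with difference covariance matrix D, let u, v ∈ ℝ^N, and suppose v − u is not a scalar multiple of the all-ones vector 1_N. Let p* = ((u − v)ᵀ R⁻¹ 1_N)/(1_Nᵀ R⁻¹ 1_N), w = p*·1_N + v, and let Δu, Δv ∈ ℝ^{N−1} be the difference vectors of u and v. Then for every λ > 0 the false positive and detection rates of the RSS-based likelihood ratio test coincide with those of the DRSS-based likelihood ratio test at the same threshold; explicitly, with q_R = (w − u)ᵀ R⁻¹ (w − u) and q_D = (Δv − Δu)ᵀ D⁻¹ (Δv − Δu), one has q_R = q_D > 0, and hence Q((ln λ + q_R/2)/√q_R) = Q((ln λ + q_D/2)/√q_D) and Q((ln λ − q_R/2)/√q_R) = Q((ln λ − q_D/2)/√q_D). -/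
open Matrix

/-!
Passing to differences is a linear map `g ↦ H g`, and `D = H R Hᵀ`. If `R⁻¹ z = Hᵀ x`, then
`H z = D x`, so `(H z)ᵀ D⁻¹ (H z) = (H z)ᵀ x = zᵀ R⁻¹ z`. The range of `Hᵀ` is the hyperplane of
vectors with coordinate sum zero, and `p*` is the coefficient that puts `R⁻¹ (w − u)` into
it. Since `H` kills constant vectors, `H (w − u) = Δv − Δu`.
-/

section QuadraticForm

variable {ι κ K : Type*} [Fintype ι]

theorem dotProduct_mulVec_div_smul_sub_eq_zero [Field K] {A : Matrix ι ι K} (hA : A.IsSymm)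
    {a : ι → K} (ha : a ⬝ᵥ A *ᵥ a ≠ 0) (b : ι → K) :
    a ⬝ᵥ A *ᵥ (((b ⬝ᵥ A *ᵥ a) / (a ⬝ᵥ A *ᵥ a)) • a - b) = 0 := by
  have hab : a ⬝ᵥ A *ᵥ b = b ⬝ᵥ A *ᵥ a := by
    rw [← dotProduct_transpose_mulVec, hA.eq]
  rw [mulVec_sub, mulVec_smul, dotProduct_sub, dotProduct_smul, smul_eq_mul,
    div_mul_cancel₀ _ ha, hab, sub_self]

theorem mulVec_dotProduct_inv_mul_mul_transpose_mulVec [Fintype κ] [DecidableEq ι]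
    [DecidableEq κ] [CommRing K] {R : Matrix ι ι K} {H : Matrix κ ι K} (hR : IsUnit R)
    (hD : IsUnit (H * R * Hᵀ)) {z : ι → K} {x : κ → K} (hx : R⁻¹ *ᵥ z = x ᵥ* H) :
    (H *ᵥ z) ⬝ᵥ (H * R * Hᵀ)⁻¹ *ᵥ (H *ᵥ z) = z ⬝ᵥ R⁻¹ *ᵥ z := by
  rw [isUnit_iff_isUnit_det] at hR hD
  have hz : R *ᵥ (x ᵥ* H) = z := by
    rw [← hx, mulVec_mulVec, mul_nonsing_inv _ hR, one_mulVec]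
  have hHz : (H * R * Hᵀ) *ᵥ x = H *ᵥ z := by
    rw [← hz, ← mulVec_transpose, mulVec_mulVec, mulVec_mulVec, Matrix.mul_assoc]
  calc (H *ᵥ z) ⬝ᵥ (H * R * Hᵀ)⁻¹ *ᵥ (H *ᵥ z)
      = (H *ᵥ z) ⬝ᵥ x := by
        rw [← hHz, mulVec_mulVec (M := (H * R * Hᵀ)⁻¹), nonsing_inv_mul _ hD, one_mulVec]
    _ = z ⬝ᵥ (x ᵥ* H) := by rw [dotProduct_comm, dotProduct_mulVec, dotProduct_comm]
    _ = z ⬝ᵥ R⁻¹ *ᵥ z := by rw [hx]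

end QuadraticForm

section ContrastMatrix

variable {K : Type*} [Ring K] {n : ℕ}

/-- The matrix `H` of the map sending a vector to its difference vector: row `m` is the contrast
`e_m − e_N` of coordinate `m` with the last coordinate, which serves as the reference. -/
def contrastMatrix (K : Type*) [Ring K] (n : ℕ) : Matrix (Fin n) (Fin (n + 1)) K :=
  of fun m => Pi.single m.castSucc 1 - Pi.single (Fin.last n) 1

theorem contrastMatrix_mulVec_apply (g : Fin (n + 1) → K) (m : Fin n) :
    (contrastMatrix K n *ᵥ g) m = g m.castSucc - g (Fin.last n) := by
  change (Pi.single m.castSucc 1 - Pi.single (Fin.last n) 1) ⬝ᵥ g = _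
  rw [sub_dotProduct, single_one_dotProduct, single_one_dotProduct]

theorem vecMul_contrastMatrix (x : Fin n → K) :
    x ᵥ* contrastMatrix K n = Fin.snoc (α := fun _ => K) x (-∑ m, x m) := by
  ext i
  cases i using Fin.lastCases <;>
    simp [contrastMatrix, vecMul, dotProduct, Pi.single_apply, (Fin.castSucc_ne_last _).symm]

theorem vecMul_contrastMatrix_injective : Function.Injective (contrastMatrix K n).vecMul := by
  intro x y hxy
  simp only [vecMul_contrastMatrix] at hxy
  exact (Fin.snoc_injective2 hxy).1

theorem init_vecMul_contrastMatrix {y : Fin (n + 1) → K} (hy : ∑ i, y i = 0) :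
    Fin.init y ᵥ* contrastMatrix K n = y := by
  have hlast : -∑ m, Fin.init y m = y (Fin.last n) :=
    neg_eq_of_add_eq_zero_right (by rwa [Fin.sum_univ_castSucc] at hy)
  rw [vecMul_contrastMatrix, hlast, Fin.snoc_init_self]

end ContrastMatrix

section Difference

variable {n : ℕ} {R : Matrix (Fin (n + 2)) (Fin (n + 2)) ℝ}

theorem diffVec_eq_contrastMatrix_mulVec (g : Fin (n + 2) → ℝ) :
    diffVec g = contrastMatrix ℝ (n + 1) *ᵥ g :=
  funext fun m => (contrastMatrix_mulVec_apply g m).symm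

theorem diffVec_smul_one_add_sub (c : ℝ) (u v : Fin (n + 2) → ℝ) :
    diffVec (c • 1 + v - u) = diffVec v - diffVec u := by
  ext m
  simp only [diffVec, Pi.add_apply, Pi.sub_apply, Pi.smul_apply, Pi.one_apply]
  ring

theorem diffMatrix_eq_contrastMatrix_mul_mul_transpose (hR : R.IsSymm) :
    diffMatrix R = contrastMatrix ℝ (n + 1) * R * (contrastMatrix ℝ (n + 1))ᵀ := by
  ext m k
  have hentry : (contrastMatrix ℝ (n + 1) * R * (contrastMatrix ℝ (n + 1))ᵀ) m k =
      (contrastMatrix ℝ (n + 1) *ᵥ fun j => (contrastMatrix ℝ (n + 1) *ᵥ fun i => R i j) m) k := by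
    simp only [mul_apply, mulVec, dotProduct, transpose_apply, mul_comm]
  rw [hentry]
  simp only [contrastMatrix_mulVec_apply, diffMatrix, hR.apply (Fin.last (n + 1)) k.castSucc]
  ring

theorem posDef_diffMatrix (hR : R.PosDef) : (diffMatrix R).PosDef := by
  rw [diffMatrix_eq_contrastMatrix_mul_mul_transpose (isHermitian_iff_isSymm.1 hR.isHermitian),
    ← conjTranspose_eq_transpose_of_trivial]
  exact hR.mul_mul_conjTranspose_same vecMul_contrastMatrix_injective

theorem diffVec_dotProduct_inv_diffMatrix_mulVec (hRsymm : R.IsSymm) (hR : IsUnit R)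
    (hD : IsUnit (diffMatrix R)) {z : Fin (n + 2) → ℝ} (hz : ∑ i, (R⁻¹ *ᵥ z) i = 0) :
    diffVec z ⬝ᵥ (diffMatrix R)⁻¹ *ᵥ diffVec z = z ⬝ᵥ R⁻¹ *ᵥ z := by
  rw [diffMatrix_eq_contrastMatrix_mul_mul_transpose hRsymm] at hD ⊢
  rw [diffVec_eq_contrastMatrix_mulVec]
  exact mulVec_dotProduct_inv_mul_mul_transpose_mulVec hR hD (init_vecMul_contrastMatrix hz).symm

end Difference

/-- Theorem 3: for `v − u` not a multiple of the all-ones vector, with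
`p* = ((u−v)ᵀ R⁻¹ 1)/(1ᵀ R⁻¹ 1)` and `w = p*·1 + v`, the standardized separations
`q_R = (w−u)ᵀ R⁻¹ (w−u)` and `q_D = (Δv−Δu)ᵀ D⁻¹ (Δv−Δu)` satisfy `q_R = q_D > 0`,
hence the RSS- and DRSS-based LVSs have identical false positive and detection rates
at every threshold `λ > 0`. -/
theorem rss_drss_identical_performance
    (n : ℕ) (R : Matrix (Fin (n + 2)) (Fin (n + 2)) ℝ)
    (hRsymm : R.IsSymm) (hRpd : R.PosDef)
    (u v : Fin (n + 2) → ℝ)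
    (hvu : ∀ c : ℝ, v - u ≠ c • (fun _ => (1 : ℝ))) :
    let ones : Fin (n + 2) → ℝ := fun _ => (1 : ℝ)
    let pstar : ℝ := ((u - v) ⬝ᵥ (R⁻¹).mulVec ones) / (ones ⬝ᵥ (R⁻¹).mulVec ones)
    let w : Fin (n + 2) → ℝ := pstar • ones + v
    let D := diffMatrix R
    let qR : ℝ := (w - u) ⬝ᵥ (R⁻¹).mulVec (w - u)
    let qD : ℝ := (diffVec v - diffVec u) ⬝ᵥ (D⁻¹).mulVec (diffVec v - diffVec u)
    qR = qD ∧ 0 < qD ∧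
      ∀ lam : ℝ, 0 < lam →
        gaussQ ((Real.log lam + qR / 2) / Real.sqrt qR)
            = gaussQ ((Real.log lam + qD / 2) / Real.sqrt qD) ∧
          gaussQ ((Real.log lam - qR / 2) / Real.sqrt qR)
            = gaussQ ((Real.log lam - qD / 2) / Real.sqrt qD) := by
  intro ones pstar w D qR qD
  have hdiff : diffVec (w - u) = diffVec v - diffVec u := diffVec_smul_one_add_sub pstar u v
  have hones : ones ⬝ᵥ R⁻¹ *ᵥ ones ≠ 0 :=
    (hRpd.inv.dotProduct_mulVec_pos (x := ones) one_ne_zero).ne'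
  have hsum : ∑ i, (R⁻¹ *ᵥ (w - u)) i = 0 := by
    have hwu : w - u = pstar • ones - (u - v) := by simp only [w]; abel
    rw [← one_dotProduct, hwu]
    exact dotProduct_mulVec_div_smul_sub_eq_zero (isHermitian_iff_isSymm.1 hRpd.inv.isHermitian)
      hones (u - v)
  have hq : qR = qD := by
    simp only [qR, qD, D]
    rw [← hdiff, diffVec_dotProduct_inv_diffMatrix_mulVec hRsymm hRpd.isUnit
      (posDef_diffMatrix hRpd).isUnit hsum]
  have hwu_ne : w - u ≠ 0 := fun h => hvu (-pstar) <| by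
    rw [neg_smul, eq_neg_iff_add_eq_zero, ← h]
    simp only [w]
    abel
  have hqR : 0 < qR := hRpd.inv.dotProduct_mulVec_pos hwu_ne
  exact ⟨hq, hq ▸ hqR, fun lam _ => by simp only [hq, and_self]⟩
end
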